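/- For all G ∈ A and nonzero monic H ∈ A, η*(G,H) = Σ over monic D with D ∥ (G,H)_* of |D| · μ*(H/D). -/

import Mathlib

/-!
The monic unitary divisors of a monic `H` are the products `Q(S)` (`unitaryPart`) of the full prime
powers `P ^ v_P(H)` with `P` in a set `S` of monic irreducible divisors of `H`. In these terms
`(G, H)_* = Q(T)`, where `T` consists of the `P` with `P ^ v_P(H) ∣ G`; the monic unitary divisors
of `Q(T)` are the `Q(S)` with `S ⊆ T` (`exists_of_unitary_dvd`), equivalently those with
`Q(S) ∣ G`; and `H / Q(S) = Q(Sᶜ)` has exactly `|Sᶜ|` prime divisors.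

The condition `(D, H)_* = 1` says that no `P ^ v_P(H)` divides `D`, so its indicator function is
`∏ (1 - [P ^ v_P(H) ∣ D]) = ∑_S (-1) ^ |S| [Q(S) ∣ D]`. Hence `η*(G, H)` is an alternating sum of
character sums over the multiples of `Q(S)` modulo `H = Q(S) Q(Sᶜ)`. By orthogonality
(`sum_echar_multiples`) such a sum equals `|Q(Sᶜ)|` if `Q(Sᶜ) ∣ G`, and vanishes otherwise: when
`Q(Sᶜ) ∤ G` a monomial multiple of the nonzero remainder `G Q(S) mod H` reaches every value of the
top coefficient, and the trace is surjective (`exists_trace_ne_zero`). Replacing `S` by its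
complement yields the right-hand side.
-/

open Polynomial UniqueFactorizationMonoid

variable (p : ℕ) [Fact p.Prime] (F : Type) [Field F] [Fintype F] [DecidableEq F]
  [Algebra (ZMod p) F]

/-- The absolute value `|G| = q ^ deg G` of a polynomial over `𝔽_q`. -/
def anorm (G : Polynomial F) : ℕ := Fintype.card F ^ G.natDegree

/-- `t_H(A')`: the coefficient of `T^(m-1)` in the remainder of `A'` upon division by `H`,
where `m = deg H`. -/
noncomputable def tmap (H A' : Polynomial F) : F := (A' % H).coeff (H.natDegree - 1)

/-- The additive character `E(G,H)(D) = exp(2πi · tr(t_H(G·D)) / p)`. -/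
noncomputable def echar (G H D : Polynomial F) : ℂ :=
  Complex.exp (2 * Real.pi * Complex.I *
    ((Algebra.trace (ZMod p) F (tmap F H (G * D))).val : ℂ) / (p : ℂ))

open scoped Classical in
/-- `ω(G)`: the number of distinct monic irreducible divisors of `G`. -/
noncomputable def omega (G : Polynomial F) : ℕ := (normalizedFactors G).toFinset.card

open scoped Classical in
/-- The Möbius function on `𝔽_q[T]`. -/
noncomputable def mu (G : Polynomial F) : ℤ :=
  if Squarefree G then (-1) ^ omega F G else 0

/-- The polynomial Ramanujan sum `η(G,H)`: the sum of `E(G,H)(D)` over a complete residue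
system `D` modulo `H` with `(D,H) = 1`. -/
noncomputable def eta (G H : Polynomial F) : ℂ :=
  ∑' D : {D : Polynomial F // D.degree < H.degree ∧ IsCoprime D H}, echar p F G H D.1

open scoped Classical in
/-- The unitary gcd `(G,H)_*`: the monic polynomial of highest degree dividing `G` and
unitarily dividing `H`. -/
noncomputable def ugcd (G H : Polynomial F) : Polynomial F :=
  ∏ P ∈ (normalizedFactors H).toFinset,
    if P ^ (normalizedFactors H).count P ∣ G then P ^ (normalizedFactors H).count P else 1

/-- `μ*(G) = (-1)^(ω(G))`. -/
noncomputable def muStar (G : Polynomial F) : ℤ := (-1) ^ omega F G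

/-- The unitary polynomial Ramanujan sum `η*(G,H)`: the sum of `E(G,H)(D)` over a complete
residue system `D` modulo `H` with `(D,H)_* = 1`. -/
noncomputable def etaStar (G H : Polynomial F) : ℂ :=
  ∑' D : {D : Polynomial F // D.degree < H.degree ∧ ugcd F D H = 1}, echar p F G H D.1

/-! ### Unitary divisors and sets of primes -/

open scoped Classical in
/-- The finite set of monic irreducible divisors of `H`. -/
noncomputable def primeSet (H : Polynomial F) : Finset (Polynomial F) :=
  (normalizedFactors H).toFinset

open scoped Classical in
/-- The largest power of `P` dividing `H`, for a monic irreducible `P` and `H ≠ 0`. -/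
noncomputable def primary (H P : Polynomial F) : Polynomial F :=
  P ^ (normalizedFactors H).count P

/-- The unitary divisor of `H` attached to a set `S` of monic irreducible divisors of `H`: the
product over `P ∈ S` of the largest power of `P` dividing `H`. -/
noncomputable def unitaryPart (H : Polynomial F) (S : Finset (Polynomial F)) : Polynomial F :=
  ∏ P ∈ S, primary F H P

section

set_option linter.unusedSectionVars false

variable {F}

lemma mem_primeSet {H : Polynomial F} (hH0 : H ≠ 0) {P : Polynomial F} :
    P ∈ primeSet F H ↔ Irreducible P ∧ P.Monic ∧ P ∣ H := by
  classical
  rw [primeSet, Multiset.mem_toFinset, mem_normalizedFactors_iff' hH0]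
  constructor
  · rintro ⟨h1, h2, h3⟩
    exact ⟨h1, h2 ▸ Polynomial.monic_normalize h1.ne_zero, h3⟩
  · rintro ⟨h1, h2, h3⟩
    exact ⟨h1, h2.normalize_eq_self, h3⟩

lemma dvd_primary {H P : Polynomial F} (hP : P ∈ primeSet F H) : P ∣ primary F H P := by
  rw [primeSet, Multiset.mem_toFinset] at hP
  exact dvd_pow_self P (Multiset.count_pos.2 hP).ne'

lemma primary_monic {H P : Polynomial F} (hH0 : H ≠ 0) (hP : P ∈ primeSet F H) :
    (primary F H P).Monic := ((mem_primeSet hH0).1 hP).2.1.pow _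

lemma unitaryPart_monic {H : Polynomial F} (hH0 : H ≠ 0) {S : Finset (Polynomial F)}
    (hS : S ⊆ primeSet F H) : (unitaryPart F H S).Monic :=
  monic_prod_of_monic _ _ fun _ hP => primary_monic hH0 (hS hP)

/-- The irreducibles of `primeSet F H` dividing `unitaryPart F H S` are exactly those of `S`. -/
lemma dvd_unitaryPart_iff {H : Polynomial F} (hH0 : H ≠ 0) {S : Finset (Polynomial F)}
    (hS : S ⊆ primeSet F H) {P : Polynomial F} (hi : Irreducible P) (hm : P.Monic) :
    P ∣ unitaryPart F H S ↔ P ∈ S := by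
  constructor
  · intro h
    obtain ⟨Q, hQ, hPQ⟩ := (hi.prime.dvd_finsetProd_iff _).1 h
    have hQ' := (mem_primeSet hH0).1 (hS hQ)
    have := hi.associated_of_dvd hQ'.1 (hi.prime.dvd_of_dvd_pow hPQ)
    rwa [eq_of_monic_of_associated hm hQ'.2.1 this]
  · intro h
    exact (dvd_primary (hS h)).trans (Finset.dvd_prod_of_mem _ h)

lemma primary_coprime {H P Q : Polynomial F} (hH0 : H ≠ 0) (hP : P ∈ primeSet F H)
    (hQ : Q ∈ primeSet F H) (h : P ≠ Q) : IsCoprime (primary F H P) (primary F H Q) := by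
  have hP' := (mem_primeSet hH0).1 hP
  have hQ' := (mem_primeSet hH0).1 hQ
  refine IsCoprime.pow ((hP'.1.coprime_iff_not_dvd).2 fun hd => h ?_)
  exact eq_of_monic_of_associated hP'.2.1 hQ'.2.1 (hP'.1.associated_of_dvd hQ'.1 hd)

lemma unitaryPart_dvd_iff {H : Polynomial F} (hH0 : H ≠ 0) {S : Finset (Polynomial F)}
    (hS : S ⊆ primeSet F H) {D : Polynomial F} :
    unitaryPart F H S ∣ D ↔ ∀ P ∈ S, primary F H P ∣ D := by
  constructor
  · intro h P hP
    exact (Finset.dvd_prod_of_mem _ hP).trans h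
  · intro h
    refine Finset.prod_dvd_of_coprime ?_ h
    intro P hP Q hQ hne
    exact primary_coprime hH0 (hS hP) (hS hQ) hne

lemma unitaryPart_primeSet {H : Polynomial F} (hH : H.Monic) (hH0 : H ≠ 0) :
    unitaryPart F H (primeSet F H) = H := by
  classical
  have h := prod_normalizedFactors_eq hH0
  rw [hH.normalize_eq_self, Finset.prod_multiset_count] at h
  exact h

open scoped Classical in
lemma unitaryPart_mul_sdiff (H : Polynomial F) {S T : Finset (Polynomial F)} (hS : S ⊆ T) :
    unitaryPart F H S * unitaryPart F H (T \ S) = unitaryPart F H T := by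
  rw [mul_comm]
  exact Finset.prod_sdiff hS

lemma unitaryPart_coprime {H : Polynomial F} (hH0 : H ≠ 0) {S T : Finset (Polynomial F)}
    (hS : S ⊆ primeSet F H) (hT : T ⊆ primeSet F H) (h : Disjoint S T) :
    IsCoprime (unitaryPart F H S) (unitaryPart F H T) := by
  refine IsCoprime.prod_left fun P hP => IsCoprime.prod_right fun Q hQ => ?_
  exact primary_coprime hH0 (hS hP) (hT hQ) (Finset.disjoint_left.1 h hP <| · ▸ hQ)

lemma omega_unitaryPart {H : Polynomial F} (hH0 : H ≠ 0) {S : Finset (Polynomial F)}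
    (hS : S ⊆ primeSet F H) : omega F (unitaryPart F H S) = S.card := by
  have h : primeSet F (unitaryPart F H S) = S := by
    ext P
    rw [mem_primeSet (unitaryPart_monic hH0 hS).ne_zero]
    constructor
    · rintro ⟨h1, h2, h3⟩
      exact (dvd_unitaryPart_iff hH0 hS h1 h2).1 h3
    · intro h
      have h' := (mem_primeSet hH0).1 (hS h)
      exact ⟨h'.1, h'.2.1, (dvd_unitaryPart_iff hH0 hS h'.1 h'.2.1).2 h⟩
  conv_rhs => rw [← h]
  rfl

lemma unitaryPart_injOn {H : Polynomial F} (hH0 : H ≠ 0) {S T : Finset (Polynomial F)}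
    (hS : S ⊆ primeSet F H) (hT : T ⊆ primeSet F H)
    (h : unitaryPart F H S = unitaryPart F H T) : S = T := by
  ext P
  constructor <;> intro hP
  · have h' := (mem_primeSet hH0).1 (hS hP)
    rw [← dvd_unitaryPart_iff hH0 hT h'.1 h'.2.1, ← h, dvd_unitaryPart_iff hH0 hS h'.1 h'.2.1]
    exact hP
  · have h' := (mem_primeSet hH0).1 (hT hP)
    rw [← dvd_unitaryPart_iff hH0 hS h'.1 h'.2.1, h, dvd_unitaryPart_iff hH0 hT h'.1 h'.2.1]
    exact hP

open scoped Classical in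
lemma ugcd_eq_unitaryPart (G H : Polynomial F) :
    ugcd F G H = unitaryPart F H ((primeSet F H).filter fun P => primary F H P ∣ G) := by
  rw [unitaryPart, Finset.prod_filter]
  rfl

lemma ugcd_eq_one_iff {D H : Polynomial F} (hH0 : H ≠ 0) :
    ugcd F D H = 1 ↔ ∀ P ∈ primeSet F H, ¬ primary F H P ∣ D := by
  classical
  rw [ugcd_eq_unitaryPart, ← Finset.filter_eq_empty_iff]
  constructor
  · intro h
    exact unitaryPart_injOn hH0 (Finset.filter_subset _ _) (Finset.empty_subset _)
      (h.trans (by simp [unitaryPart]))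
  · intro h
    rw [h]
    simp [unitaryPart]

/-- Every monic unitary divisor of `unitaryPart F H T` is `unitaryPart F H S` for some `S ⊆ T`. -/
lemma exists_of_unitary_dvd {H : Polynomial F} (hH0 : H ≠ 0) {T : Finset (Polynomial F)}
    (hT : T ⊆ primeSet F H) {D E : Polynomial F} (hD : D.Monic) (hDE : D * E = unitaryPart F H T)
    (hco : IsCoprime D E) : ∃ S ⊆ T, D = unitaryPart F H S := by
  classical
  set S := T.filter fun P => primary F H P ∣ D with hSdef
  have hST : S ⊆ T := Finset.filter_subset _ _
  have h1 : unitaryPart F H S ∣ D :=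
    (unitaryPart_dvd_iff hH0 (hST.trans hT)).2 fun P hP => (Finset.mem_filter.1 hP).2
  have h2 : unitaryPart F H (T \ S) ∣ E := by
    refine (unitaryPart_dvd_iff hH0 (Finset.sdiff_subset.trans hT)).2 fun P hP => ?_
    obtain ⟨hPT, hPS⟩ := Finset.mem_sdiff.1 hP
    have hp := ((mem_primeSet hH0).1 (hT hPT)).1
    have hdvd : primary F H P ∣ D * E := hDE ▸ Finset.dvd_prod_of_mem _ hPT
    -- A prime dividing both `D` and `E` would be a unit, so `P` misses one of them, and then
    -- the whole power of `P` divides the other one.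
    by_cases hPD : P ∣ D
    · have hPE : ¬ P ∣ E := fun hPE => hp.not_isUnit (hco.isUnit_of_dvd' hPD hPE)
      refine absurd (Finset.mem_filter.2 ⟨hPT, ?_⟩) hPS
      rw [mul_comm] at hdvd
      exact hp.prime.pow_dvd_of_dvd_mul_left _ hPE hdvd
    · exact hp.prime.pow_dvd_of_dvd_mul_left _ hPD hdvd
  obtain ⟨a, ha⟩ := h1
  obtain ⟨b, hb⟩ := h2
  refine ⟨S, hST, ?_⟩
  have hne := (unitaryPart_monic hH0 hT).ne_zero
  have hab : a * b = 1 := by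
    have h3 := unitaryPart_mul_sdiff H hST
    apply mul_left_cancel₀ hne
    calc unitaryPart F H T * (a * b)
        = (unitaryPart F H S * a) * (unitaryPart F H (T \ S) * b) := by rw [← h3]; ring
      _ = unitaryPart F H T * 1 := by rw [← ha, ← hb, hDE, mul_one]
  have hunit : IsUnit a := IsUnit.of_mul_eq_one _ hab
  exact eq_of_monic_of_associated hD (unitaryPart_monic hH0 (hST.trans hT))
    (ha ▸ (associated_mul_unit_left _ _ hunit))

/-! ### Orthogonality of the additive characters -/

lemma tmap_add (H A B : Polynomial F) : tmap F H (A + B) = tmap F H A + tmap F H B := by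
  simp [tmap, Polynomial.add_mod]

lemma tmap_congr {H A B : Polynomial F} (h : H ∣ A - B) : tmap F H A = tmap F H B := by
  rw [tmap, tmap, Polynomial.mod_eq_of_dvd_sub h]

lemma echar_eq (G H D : Polynomial F) :
    echar p F G H D = ZMod.stdAddChar (Algebra.trace (ZMod p) F (tmap F H (G * D))) := by
  rw [ZMod.stdAddChar_apply, ZMod.toCircle_apply]
  rfl

/-- If `R ∤ G`, the character `D' ↦ E(G, QR)(QD')` is nontrivial on polynomials of degree less
than `deg R`: a suitable monomial multiple of `GQ mod QR` has any prescribed top coefficient. -/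
lemma exists_trace_ne_zero {G Q R : Polynomial F} (hQR : Q * R ≠ 0) (h : ¬ R ∣ G) :
    ∃ D : Polynomial F, D.degree < R.degree ∧
      Algebra.trace (ZMod p) F (tmap F (Q * R) (G * (Q * D))) ≠ 0 := by
  have hQ : Q ≠ 0 := left_ne_zero_of_mul hQR
  have hR : R ≠ 0 := right_ne_zero_of_mul hQR
  set r := (G * Q) % (Q * R) with hr
  have hr0 : r ≠ 0 := by
    intro h0
    rw [hr, EuclideanDomain.mod_eq_zero, mul_comm Q R] at h0
    exact h ((mul_dvd_mul_iff_right hQ).1 h0)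
  have hdeg : r.degree < (Q * R).degree := Polynomial.degree_mod_lt _ hQR
  have hnat : r.natDegree < (Q * R).natDegree := Polynomial.natDegree_lt_natDegree hr0 hdeg
  obtain ⟨y, hy⟩ := Algebra.trace_surjective (ZMod p) F 1
  have hl : r.leadingCoeff ≠ 0 := Polynomial.leadingCoeff_ne_zero.2 hr0
  set k := (Q * R).natDegree - 1 - r.natDegree with hk
  set c := y * r.leadingCoeff⁻¹ with hc
  refine ⟨(C c * X ^ k) % R, Polynomial.degree_mod_lt _ hR, ?_⟩
  have h1 : tmap F (Q * R) (G * (Q * ((C c * X ^ k) % R))) = tmap F (Q * R) (C c * X ^ k * r) := by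
    apply tmap_congr
    have e1 := EuclideanDomain.div_add_mod (C c * X ^ k) R
    have e2 := EuclideanDomain.div_add_mod (G * Q) (Q * R)
    rw [← hr] at e2
    refine ⟨(C c * X ^ k) * (G * Q / (Q * R)) - G * (C c * X ^ k / R), ?_⟩
    linear_combination (-(C c * X ^ k)) * e2 + G * Q * e1
  have hcoeff : (C c * X ^ k * r).coeff ((Q * R).natDegree - 1) = y := by
    have : (Q * R).natDegree - 1 = r.natDegree + k := by omega
    rw [this, mul_assoc, Polynomial.coeff_C_mul, Polynomial.coeff_X_pow_mul,
      Polynomial.coeff_natDegree, hc, inv_mul_cancel_right₀ hl]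
  have hlt : (C c * X ^ k * r).degree < (Q * R).degree := by
    refine Polynomial.degree_lt_degree ?_
    have a1 := Polynomial.natDegree_mul_le (p := C c * X ^ k) (q := r)
    have a2 := Polynomial.natDegree_C_mul_X_pow_le c k
    omega
  rw [h1, tmap, (Polynomial.mod_eq_self_iff hQR).2 hlt, hcoeff, hy]
  exact one_ne_zero

lemma finite_degree_lt (H : Polynomial F) : {D : Polynomial F | D.degree < H.degree}.Finite := by
  by_cases h : H = 0
  · simp [h]
  have : Finite (Polynomial.degreeLT F H.natDegree) :=
    Finite.of_equiv _ (Polynomial.degreeLTEquiv F H.natDegree).symm.toEquiv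
  refine Set.Finite.subset (Set.toFinite (Polynomial.degreeLT F H.natDegree : Set _)) fun D hD => ?_
  rw [Set.mem_ofPred_eq, Polynomial.degree_eq_natDegree h] at hD
  exact Polynomial.mem_degreeLT.2 hD

/-- The complete residue system modulo `H` formed by the polynomials of degree less than `deg H`. -/
noncomputable def residues (H : Polynomial F) : Finset (Polynomial F) :=
  (finite_degree_lt H).toFinset

lemma mem_residues {H D : Polynomial F} : D ∈ residues H ↔ D.degree < H.degree := by
  simp [residues]

open scoped Classical in
/-- Orthogonality on the multiples of a divisor `Q` of the modulus `QR`. -/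
lemma sum_echar_multiples {G Q R : Polynomial F} (hQR : Q * R ≠ 0) :
    ∑ D ∈ (residues (Q * R)).filter (Q ∣ ·), echar p F G (Q * R) D =
      if R ∣ G then (anorm F R : ℂ) else 0 := by
  have hQ : Q ≠ 0 := left_ne_zero_of_mul hQR
  have hR : R ≠ 0 := right_ne_zero_of_mul hQR
  let V := Polynomial.degreeLT F R.natDegree
  have : Finite V := Finite.of_equiv _ (Polynomial.degreeLTEquiv F R.natDegree).symm.toEquiv
  have : Fintype V := Fintype.ofFinite V
  have hV : ∀ D : Polynomial F, D ∈ V ↔ D.degree < R.degree := fun D => by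
    rw [Polynomial.mem_degreeLT, Polynomial.degree_eq_natDegree hR]
  let φ : V →+ ZMod p :=
    { toFun := fun D => Algebra.trace (ZMod p) F (tmap F (Q * R) (G * (Q * D.1)))
      map_zero' := by simp [tmap]
      map_add' := fun a b => by
        rw [← map_add, ← tmap_add]
        congr 2
        push_cast
        ring }
  let ψ : AddChar V ℂ := (ZMod.stdAddChar (N := p)).compAddMonoidHom φ
  have h1 : ∑ D ∈ (residues (Q * R)).filter (Q ∣ ·), echar p F G (Q * R) D = ∑ v : V, ψ v := by
    symm
    refine Finset.sum_bij (fun v _ => Q * v.1) ?_ ?_ ?_ ?_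
    · intro v _
      rw [Finset.mem_filter, mem_residues, Polynomial.degree_mul, Polynomial.degree_mul]
      refine ⟨?_, dvd_mul_right _ _⟩
      have := (hV v.1).1 v.2
      rw [Polynomial.degree_eq_natDegree hQ]
      exact WithBot.add_lt_add_left (by simp) this
    · intro a _ b _ hab
      exact Subtype.ext (mul_left_cancel₀ hQ hab)
    · intro D hD
      rw [Finset.mem_filter, mem_residues] at hD
      obtain ⟨hD, E, rfl⟩ := hD
      refine ⟨⟨E, (hV E).2 ?_⟩, Finset.mem_univ _, rfl⟩
      rw [Polynomial.degree_mul, Polynomial.degree_mul] at hD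
      exact lt_of_add_lt_add_left hD
    · intro v _
      rw [echar_eq]
      rfl
  rw [h1, AddChar.sum_eq_ite]
  have hcard : Fintype.card V = anorm F R := by
    rw [anorm, Fintype.card_congr (Polynomial.degreeLTEquiv F R.natDegree).toEquiv]
    simp
  have hiff : ψ = 0 ↔ R ∣ G := by
    constructor
    · intro h0
      by_contra hd
      obtain ⟨D, hD, hne⟩ := exists_trace_ne_zero p hQR hd
      apply hne
      apply ZMod.injective_stdAddChar
      rw [AddChar.map_zero_eq_one]
      have : ψ ⟨D, (hV D).2 hD⟩ = 1 := by rw [h0]; rfl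
      exact this
    · rintro ⟨E, rfl⟩
      ext v
      have : φ v = 0 := by
        change Algebra.trace (ZMod p) F (tmap F (Q * R) (R * E * (Q * v.1))) = 0
        have : tmap F (Q * R) (R * E * (Q * v.1)) = tmap F (Q * R) 0 :=
          tmap_congr ⟨E * v.1, by ring⟩
        rw [this]
        simp [tmap]
      change ZMod.stdAddChar (φ v) = 1
      rw [this, AddChar.map_zero_eq_one]
  simp only [hiff, hcard]

/-! ### The two sides as sums over sets of primes -/

open scoped Classical in
lemma etaStar_eq_sum_powerset (G : Polynomial F) {H : Polynomial F} (hH : H.Monic) (hH0 : H ≠ 0) :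
    etaStar p F G H = ∑ S ∈ (primeSet F H).powerset, (-1 : ℂ) ^ (primeSet F H \ S).card *
      if unitaryPart F H S ∣ G then (anorm F (unitaryPart F H S) : ℂ) else 0 := by
  have h1 : etaStar p F G H =
      ∑ D ∈ (residues H).filter (fun D => ugcd F D H = 1), echar p F G H D := by
    have hmem : ∀ D : Polynomial F, (D.degree < H.degree ∧ ugcd F D H = 1) ↔
        D ∈ (residues H).filter (fun D => ugcd F D H = 1) := fun D => by
      rw [Finset.mem_filter, mem_residues]
    rw [etaStar, ← (Equiv.subtypeEquivRight hmem).symm.tsum_eq]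
    exact Finset.tsum_subtype _ (echar p F G H)
  -- Expanding `∏ (1 - [P ^ v ∣ D])` gives the indicator of `(D, H)_* = 1`.
  have h2 : ∀ D : Polynomial F, (if ugcd F D H = 1 then (1 : ℂ) else 0) =
      ∑ S ∈ (primeSet F H).powerset,
        (-1 : ℂ) ^ S.card * if unitaryPart F H S ∣ D then 1 else 0 := by
    intro D
    have e1 : (if ugcd F D H = 1 then (1 : ℂ) else 0) =
        ∏ P ∈ primeSet F H, (1 - if primary F H P ∣ D then (1 : ℂ) else 0) := by
      split_ifs with h <;> rw [ugcd_eq_one_iff hH0] at h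
      · exact (Finset.prod_eq_one fun P hP => by simp [h P hP]).symm
      · push Not at h
        obtain ⟨P, hP, hd⟩ := h
        exact (Finset.prod_eq_zero hP (by simp [hd])).symm
    rw [e1, Finset.prod_sub]
    refine Finset.sum_congr rfl fun S hS => ?_
    rw [Finset.prod_const_one, mul_one, Finset.prod_ite_zero, Finset.prod_const_one]
    simp only [unitaryPart_dvd_iff hH0 (Finset.mem_powerset.1 hS)]
  rw [h1, Finset.sum_filter]
  have h3 : ∀ D, (if ugcd F D H = 1 then echar p F G H D else 0) =
      ∑ S ∈ (primeSet F H).powerset,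
        (-1 : ℂ) ^ S.card * if unitaryPart F H S ∣ D then echar p F G H D else 0 := by
    intro D
    have := congrArg (· * echar p F G H D) (h2 D)
    simpa [ite_mul, Finset.sum_mul, mul_assoc] using this
  simp_rw [h3]
  rw [Finset.sum_comm]
  -- Passing to complements turns `H / Q(S)` into `Q(S)`.
  refine Finset.sum_nbij' (fun S => primeSet F H \ S) (fun S => primeSet F H \ S) ?_ ?_ ?_ ?_ ?_
  · intro S _
    simp
  · intro S _
    simp
  · intro S hS
    exact Finset.sdiff_sdiff_eq_self (Finset.mem_powerset.1 hS)
  · intro S hS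
    exact Finset.sdiff_sdiff_eq_self (Finset.mem_powerset.1 hS)
  · intro S hS
    have hS' := Finset.mem_powerset.1 hS
    have hQR : unitaryPart F H S * unitaryPart F H (primeSet F H \ S) = H := by
      rw [unitaryPart_mul_sdiff H hS', unitaryPart_primeSet hH hH0]
    have key := sum_echar_multiples p (G := G) (hQR.symm ▸ hH0)
    rw [hQR] at key
    rw [Finset.sdiff_sdiff_eq_self hS', ← key, ← Finset.mul_sum, Finset.sum_filter]

open scoped Classical in
lemma tsum_unitary_eq_sum_powerset (G : Polynomial F) {H : Polynomial F} (hH : H.Monic)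
    (hH0 : H ≠ 0) :
    ∑' D : {D : Polynomial F // D.Monic ∧ D ∣ ugcd F G H ∧ IsCoprime D (ugcd F G H / D)},
        (anorm F D.1 : ℂ) * (muStar F (H / D.1) : ℂ) =
      ∑ S ∈ ((primeSet F H).filter fun P => primary F H P ∣ G).powerset,
        (anorm F (unitaryPart F H S) : ℂ) * (-1) ^ (primeSet F H \ S).card := by
  set T := (primeSet F H).filter fun P => primary F H P ∣ G with hT
  have hTH : T ⊆ primeSet F H := Finset.filter_subset _ _
  have hset : ∀ D : Polynomial F,
      (D.Monic ∧ D ∣ ugcd F G H ∧ IsCoprime D (ugcd F G H / D)) ↔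
        D ∈ T.powerset.image (unitaryPart F H) := by
    intro D
    rw [ugcd_eq_unitaryPart, ← hT, Finset.mem_image]
    constructor
    · rintro ⟨hD, ⟨E, hE⟩, hco⟩
      rw [hE, mul_div_cancel_left₀ _ hD.ne_zero] at hco
      obtain ⟨S, hS, h⟩ := exists_of_unitary_dvd hH0 hTH hD hE.symm hco
      exact ⟨S, Finset.mem_powerset.2 hS, h.symm⟩
    · rintro ⟨S, hS, rfl⟩
      have hS' := Finset.mem_powerset.1 hS
      have hm := unitaryPart_monic hH0 (hS'.trans hTH)
      rw [← unitaryPart_mul_sdiff H hS', mul_div_cancel_left₀ _ hm.ne_zero]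
      exact ⟨hm, dvd_mul_right _ _, unitaryPart_coprime hH0 (hS'.trans hTH)
        (Finset.sdiff_subset.trans hTH) Finset.disjoint_sdiff⟩
  rw [← (Equiv.subtypeEquivRight hset).symm.tsum_eq]
  refine (Finset.tsum_subtype (T.powerset.image (unitaryPart F H))
    (fun D => (anorm F D : ℂ) * (muStar F (H / D) : ℂ))).trans ?_
  rw [Finset.sum_image fun S hS S' hS' h => unitaryPart_injOn hH0
    ((Finset.mem_powerset.1 hS).trans hTH) ((Finset.mem_powerset.1 hS').trans hTH) h]
  refine Finset.sum_congr rfl fun S hS => ?_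
  have hS' := (Finset.mem_powerset.1 hS).trans hTH
  have hdiv : H / unitaryPart F H S = unitaryPart F H (primeSet F H \ S) := by
    have h := unitaryPart_mul_sdiff H hS'
    rw [unitaryPart_primeSet hH hH0] at h
    refine (congrArg (· / unitaryPart F H S) h).symm.trans ?_
    exact mul_div_cancel_left₀ _ (unitaryPart_monic hH0 hS').ne_zero
  rw [hdiv, muStar, omega_unitaryPart hH0 Finset.sdiff_subset]
  push_cast
  rfl

end

/-- `η*(G,H) = Σ_{D ∥ (G,H)_*, D monic} |D| · μ*(H/D)` for all `G ∈ A` and nonzero monic `H`. -/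
theorem etaStar_eq_sum_unitary_divisors (G H : Polynomial F) (hH : H.Monic) (hH0 : H ≠ 0) :
    etaStar p F G H =
      ∑' D : {D : Polynomial F // D.Monic ∧ D ∣ ugcd F G H ∧ IsCoprime D (ugcd F G H / D)},
        (anorm F D.1 : ℂ) * (muStar F (H / D.1) : ℂ) := by
  classical
  rw [etaStar_eq_sum_powerset p G hH hH0, tsum_unitary_eq_sum_powerset G hH hH0]
  -- The terms with `Q(S) ∤ G` vanish, and `Q(S) ∣ G` means that `S` lies in the smaller set.
  have hsub : ((primeSet F H).filter fun P => primary F H P ∣ G).powerset =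
      (primeSet F H).powerset.filter fun S => unitaryPart F H S ∣ G := by
    ext S
    rw [Finset.mem_filter, Finset.mem_powerset, Finset.mem_powerset, Finset.subset_iff]
    constructor
    · intro h
      have hS : S ⊆ primeSet F H := fun P hP => (Finset.mem_filter.1 (h hP)).1
      exact ⟨hS, (unitaryPart_dvd_iff hH0 hS).2 fun P hP => (Finset.mem_filter.1 (h hP)).2⟩
    · rintro ⟨hS, h⟩ P hP
      exact Finset.mem_filter.2 ⟨hS hP, (unitaryPart_dvd_iff hH0 hS).1 h P hP⟩
  rw [hsub, Finset.sum_filter]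
  refine Finset.sum_congr rfl fun S _ => ?_
  split_ifs
  · rw [mul_comm]
  · rw [mul_zero]
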